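/- There exist real constants c > 0, C > 0 and a natural number n₀ such that for all n ≥ n₀: 2^{c·n·log₂ n} ≤ f(n,3,4,{0,1,3}) ≤ 2^{C·n·log₂ n}; that is, the number of ({0,1,3},4)-free 3-graphs on [n] is n^{Θ(n)}. -/

import Mathlib

open Finset

/-- The family of all `r`-graphs on `[n]`: sets of `r`-element subsets of `Fin n`. -/
def rGraphs (n r : ℕ) : Finset (Finset (Finset (Fin n))) :=
  (Finset.univ.powersetCard r).powerset

/-- `G` is `(L,k)`-free: for every `k`-element vertex set `S`, the number of edges of `G`
contained in `S` does not belong to `L`. -/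
def IsLKFree (n k : ℕ) (L : Finset ℕ) (G : Finset (Finset (Fin n))) : Prop :=
  ∀ S : Finset (Fin n), S.card = k → (G.filter (fun e => e ⊆ S)).card ∉ L

instance (n k : ℕ) (L : Finset ℕ) : DecidablePred (IsLKFree n k L) := fun G =>
  inferInstanceAs (Decidable (∀ S : Finset (Fin n), S.card = k →
    (G.filter (fun e => e ⊆ S)).card ∉ L))

/-- `f(n,r,k,L)`: the number of `(L,k)`-free `r`-graphs on `[n]`. -/
def numFree (n r k : ℕ) (L : Finset ℕ) : ℕ :=
  ((rGraphs n r).filter (IsLKFree n k L)).card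

/-!
Every 4-set spans two or four edges of a `({0, 1, 3}, 4)`-free 3-graph `G`. Evenness makes `G` a
two-graph, so for any vertex `v` it consists of the triples that span an even number of edges of the
graph `Γ` formed by the pairs `x, y` with `{v, x, y} ∉ G`. Since `v` is isolated in `Γ`, the
remaining condition, that no 4-set is empty, says exactly that `Γ` has no triangle and no induced
`2K₂`. Such a `Γ` is 3-colourable: given an edge `ab`, colour the neighbours of `a`, the neighbours
of `b`, and the rest. Between two colour classes the neighbourhoods form a chain, so `Γ` is
determined by the colouring and the coloured degrees, which leaves `n ^ O(n)` graphs. Conversely,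
each map `f : [k] → [k]` yields a bipartite graph with nested neighbourhoods, in which `a` is joined
to all `b < f a`; with `k` about `n / 2` this gives `n ^ Ω(n)` graphs.
-/

section TwoGraph

variable {V : Type*}

theorem card_filter_subset_eq_card_filter_erase [DecidableEq V] {r : ℕ} {G : Finset (Finset V)}
    (hG : (G : Set (Finset V)).Sized r) {S : Finset V} (hS : #S = r + 1) :
    #{e ∈ G | e ⊆ S} = #{t ∈ S | S.erase t ∈ G} := by
  have himage : {e ∈ G | e ⊆ S} = image S.erase {t ∈ S | S.erase t ∈ G} := by
    ext e
    simp only [mem_filter, mem_image]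
    constructor
    · rintro ⟨he, heS⟩
      obtain ⟨t, ht, rfl⟩ := exists_eq_insert_iff.2 ⟨heS, by rw [hG he, hS]⟩
      exact ⟨t, by simp [erase_insert ht, he]⟩
    · rintro ⟨t, ⟨-, he⟩, rfl⟩
      exact ⟨he, erase_subset t S⟩
  rw [himage, card_image_of_injOn (S.erase_injOn.mono (filter_subset _ S))]

theorem card_filter_subset_quadruple [DecidableEq V] {G : Finset (Finset V)}
    (hG : (G : Set (Finset V)).Sized 3) {a b c d : V} (hab : a ≠ b) (hac : a ≠ c) (had : a ≠ d)
    (hbc : b ≠ c) (hbd : b ≠ d) (hcd : c ≠ d) :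
    #{e ∈ G | e ⊆ {a, b, c, d}} = (if {b, c, d} ∈ G then 1 else 0) +
      ((if {a, c, d} ∈ G then 1 else 0) +
        ((if {a, b, d} ∈ G then 1 else 0) + if {a, b, c} ∈ G then 1 else 0)) := by
  have ha : ({a, b, c, d} : Finset V).erase a = {b, c, d} := by grind
  have hb : ({a, b, c, d} : Finset V).erase b = {a, c, d} := by grind
  have hc : ({a, b, c, d} : Finset V).erase c = {a, b, d} := by grind
  have hd : ({a, b, c, d} : Finset V).erase d = {a, b, c} := by grind
  rw [card_filter_subset_eq_card_filter_erase hG (card_eq_four.2 ⟨a, b, c, d, by simp [*]⟩),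
    card_filter, sum_insert (by simp [*]), sum_insert (by simp [*]), sum_insert (by simp [*]),
    sum_singleton, ha, hb, hc, hd]

/-- Two-graphs in the sense of Seidel: 3-uniform families having an even number of members inside
every 4-set. -/
def IsTwoGraph [DecidableEq V] (G : Finset (Finset V)) : Prop :=
  (G : Set (Finset V)).Sized 3 ∧ ∀ ⦃S : Finset V⦄, #S = 4 → Even #{e ∈ G | e ⊆ S}

/-- Families with a member inside every 4-set; for 3-graphs, this forbids the edge count `0` that
the two-graph condition still permits. -/
def MeetsEveryQuadruple (G : Finset (Finset V)) : Prop :=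
  ∀ ⦃S : Finset V⦄, #S = 4 → ∃ e ∈ G, e ⊆ S

theorem mem_filter_isLKFree_zero_one_three_iff {n : ℕ} {G : Finset (Finset (Fin n))} :
    G ∈ (rGraphs n 3).filter (IsLKFree n 4 {0, 1, 3}) ↔ IsTwoGraph G ∧ MeetsEveryQuadruple G := by
  have huniform : G ∈ rGraphs n 3 ↔ (G : Set (Finset (Fin n))).Sized 3 := by
    simp [rGraphs, subset_iff, Set.Sized]
  rw [mem_filter, huniform, IsTwoGraph, and_assoc, and_congr_right_iff]
  intro hG
  rw [MeetsEveryQuadruple, ← forall₂_and]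
  refine forall₂_congr fun S hS => ?_
  have hpos : (∃ e ∈ G, e ⊆ S) ↔ 0 < #{e ∈ G | e ⊆ S} := by
    simp [card_pos, filter_nonempty_iff]
  have hle : #{e ∈ G | e ⊆ S} ≤ 4 := by
    rw [card_filter_subset_eq_card_filter_erase hG hS, ← hS]
    exact card_filter_le _ _
  rw [hpos]
  interval_cases #{e ∈ G | e ⊆ S} <;> decide

theorem even_card_filter_subset_quadruple_iff [DecidableEq V] {G : Finset (Finset V)}
    (hG : (G : Set (Finset V)).Sized 3) {a b c d : V} (hab : a ≠ b) (hac : a ≠ c) (had : a ≠ d)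
    (hbc : b ≠ c) (hbd : b ≠ d) (hcd : c ≠ d) :
    Even #{e ∈ G | e ⊆ {a, b, c, d}} ↔
      (({b, c, d} ∈ G ↔ {a, c, d} ∈ G) ↔ ({a, b, d} ∈ G ↔ {a, b, c} ∈ G)) := by
  rw [card_filter_subset_quadruple hG hab hac had hbc hbd hcd]
  split_ifs <;> simp +arith +decide [*]

theorem exists_mem_subset_quadruple_iff [DecidableEq V] {G : Finset (Finset V)}
    (hG : (G : Set (Finset V)).Sized 3) {a b c d : V} (hab : a ≠ b) (hac : a ≠ c) (had : a ≠ d)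
    (hbc : b ≠ c) (hbd : b ≠ d) (hcd : c ≠ d) :
    (∃ e ∈ G, e ⊆ {a, b, c, d}) ↔
      {b, c, d} ∈ G ∨ {a, c, d} ∈ G ∨ {a, b, d} ∈ G ∨ {a, b, c} ∈ G := by
  have hpos : (∃ e ∈ G, e ⊆ {a, b, c, d}) ↔ #{e ∈ G | e ⊆ {a, b, c, d}} ≠ 0 := by simp
  rw [hpos, card_filter_subset_quadruple hG hab hac had hbc hbd hcd]
  split_ifs <;> simp [*]

/-- The link at `v` of the complement of `G`: the graph of the pairs completing `v` to a non-edge of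
`G`. For a two-graph `G` it is the unique `Γ` isolating `v` with `evenTriples Γ = G`. -/
def coLink [DecidableEq V] (v : V) (G : Finset (Finset V)) : SimpleGraph V where
  Adj x y := v ≠ x ∧ v ≠ y ∧ x ≠ y ∧ {v, x, y} ∉ G
  symm := ⟨fun _ _ ⟨hx, hy, hxy, hG⟩ => ⟨hy, hx, hxy.symm, by rwa [pair_comm]⟩⟩
  loopless := ⟨fun _ h => h.2.2.1 rfl⟩

theorem isIsolated_coLink [DecidableEq V] (v : V) (G : Finset (Finset V)) :
    (coLink v G).IsIsolated v :=
  fun _ hadj => hadj.1 rfl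

theorem IsTwoGraph.eq_of_coLink_eq [DecidableEq V] {v : V} {G H : Finset (Finset V)}
    (hG : IsTwoGraph G) (hH : IsTwoGraph H) (h : coLink v G = coLink v H) : G = H := by
  have hlink {x y : V} (hx : v ≠ x) (hy : v ≠ y) (hxy : x ≠ y) :
      {v, x, y} ∈ G ↔ {v, x, y} ∈ H := by
    simpa [coLink, hx, hy, hxy, not_iff_not] using congrArg (fun Γ => Γ.Adj x y) h
  have htriple {x y z : V} (hxy : x ≠ y) (hxz : x ≠ z) (hyz : y ≠ z) :
      {x, y, z} ∈ G ↔ {x, y, z} ∈ H := by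
    by_cases hx : v = x
    · subst hx; exact hlink hxy hxz hyz
    by_cases hy : v = y
    · subst hy; rw [insert_comm]; exact hlink hx hyz hxz
    by_cases hz : v = z
    · subst hz; rw [pair_comm, insert_comm]; exact hlink hx hy hxy
    have hS : #{v, x, y, z} = 4 := card_eq_four.2 ⟨v, x, y, z, by simp [*]⟩
    have hevenG := (even_card_filter_subset_quadruple_iff hG.1 hx hy hz hxy hxz hyz).1 (hG.2 hS)
    have hevenH := (even_card_filter_subset_quadruple_iff hH.1 hx hy hz hxy hxz hyz).1 (hH.2 hS)
    rw [hlink hx hy hxy, hlink hx hz hxz, hlink hy hz hyz] at hevenG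
    tauto
  have hmem {e : Finset V} (he : #e = 3) : e ∈ G ↔ e ∈ H := by
    obtain ⟨x, y, z, hxy, hxz, hyz, rfl⟩ := card_eq_three.1 he
    exact htriple hxy hxz hyz
  exact ext fun e => ⟨fun he => (hmem (hG.1 he)).1 he, fun he => (hmem (hH.1 he)).2 he⟩

end TwoGraph

section InducedMatching

variable {V W : Type*} {Γ : SimpleGraph V}

/-- `Γ` has no induced `2K₂`: any two edges share a vertex or are joined by an edge. Edges sharing
a vertex satisfy the formula automatically. -/
def IsTwoKTwoFree (Γ : SimpleGraph V) : Prop :=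
  ∀ ⦃a b x y : V⦄, Γ.Adj a b → Γ.Adj x y → Γ.Adj a x ∨ Γ.Adj a y ∨ Γ.Adj b x ∨ Γ.Adj b y

theorem IsTwoKTwoFree.map (hΓ : IsTwoKTwoFree Γ) (f : V ↪ W) : IsTwoKTwoFree (Γ.map f) := by
  rintro _ _ _ _ ⟨-, a, b, hab, rfl, rfl⟩ ⟨-, x, y, hxy, rfl, rfl⟩
  simpa only [SimpleGraph.map_adj_apply] using hΓ hab hxy

theorem IsTwoKTwoFree.colorable_three (hΓ : IsTwoKTwoFree Γ) (htriangle : Γ.CliqueFree 3) :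
    Γ.Colorable 3 := by
  classical
  by_cases hedge : ∃ a b, Γ.Adj a b
  · obtain ⟨a, b, hab⟩ := hedge
    refine ⟨.mk (fun x => if Γ.Adj a x then 0 else if Γ.Adj b x then 1 else 2)
      fun {x y} hxy => ?_⟩
    have hdom := hΓ hab hxy
    have hcommon (t : V) : ¬ (Γ.Adj t x ∧ Γ.Adj t y) := fun ⟨htx, hty⟩ =>
      htriangle {t, x, y} (SimpleGraph.is3Clique_triple_iff.2 ⟨htx, hty, hxy⟩)
    have hta := hcommon a
    have htb := hcommon b
    grind
  · exact ⟨.mk (fun _ => 0) fun {x y} hxy => absurd ⟨x, y, hxy⟩ hedge⟩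

end InducedMatching

section EvenTriples

variable {V : Type*} [Fintype V]

open Classical in
/-- The triples of vertices spanning an even number of edges of `Γ`: the complement of the two-graph
that the literature attaches to `Γ`, which uses the odd triples, and again a two-graph. -/
noncomputable def evenTriples (Γ : SimpleGraph V) : Finset (Finset V) :=
  {e ∈ univ.powersetCard 3 | Even #{p ∈ e.sym2 | p ∈ Γ.edgeSet}}

variable {Γ : SimpleGraph V}

theorem sized_evenTriples : (evenTriples Γ : Set (Finset V)).Sized 3 :=
  fun _ he => (mem_powersetCard.1 (mem_filter.1 he).1).2

theorem triple_mem_evenTriples_iff [DecidableEq V] {a b c : V} (hab : a ≠ b) (hac : a ≠ c)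
    (hbc : b ≠ c) :
    {a, b, c} ∈ evenTriples Γ ↔ (¬ Γ.Adj a b ↔ (Γ.Adj a c ↔ Γ.Adj b c)) := by
  classical
  have hcard : #({a, b, c} : Finset V) = 3 := card_eq_three.2 ⟨a, b, c, hab, hac, hbc, rfl⟩
  have hpairs : {p ∈ ({a, b, c} : Finset V).sym2 | p ∈ Γ.edgeSet} =
      {p ∈ ({s(a, b), s(a, c), s(b, c)} : Finset (Sym2 V)) | p ∈ Γ.edgeSet} := by
    ext p
    induction p with | _ x y
    have hne := Γ.ne_of_adj (a := x) (b := y)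
    simp only [mem_filter, mk_mem_sym2_iff, mem_insert, mem_singleton, Sym2.eq_iff,
      SimpleGraph.mem_edgeSet]
    grind
  simp only [evenTriples, mem_filter, mem_powersetCard, subset_univ, hcard, true_and, hpairs]
  rw [card_filter, sum_insert (by grind [Sym2.eq_iff]), sum_insert (by grind [Sym2.eq_iff]),
    sum_singleton]
  simp only [SimpleGraph.mem_edgeSet]
  split_ifs <;> simp +arith +decide [*]

theorem isTwoGraph_evenTriples [DecidableEq V] : IsTwoGraph (evenTriples Γ) := by
  refine ⟨sized_evenTriples, fun S hS => ?_⟩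
  obtain ⟨a, b, c, d, hab, hac, had, hbc, hbd, hcd, rfl⟩ := card_eq_four.1 hS
  rw [even_card_filter_subset_quadruple_iff sized_evenTriples hab hac had hbc hbd hcd,
    triple_mem_evenTriples_iff hab hac hbc, triple_mem_evenTriples_iff hab had hbd,
    triple_mem_evenTriples_iff hac had hcd, triple_mem_evenTriples_iff hbc hbd hcd]
  grind

theorem coLink_evenTriples [DecidableEq V] {v : V} (hv : Γ.IsIsolated v) :
    coLink v (evenTriples Γ) = Γ := by
  ext x y
  have hx := hv x
  have hy := hv y
  have hadj := Γ.ne_of_adj (a := x) (b := y)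
  simp only [coLink]
  grind [triple_mem_evenTriples_iff, SimpleGraph.adj_comm]

theorem IsTwoGraph.evenTriples_coLink [DecidableEq V] {G : Finset (Finset V)}
    (hG : IsTwoGraph G) (v : V) :
    evenTriples (coLink v G) = G :=
  isTwoGraph_evenTriples.eq_of_coLink_eq hG (coLink_evenTriples (isIsolated_coLink v G))

theorem exists_mem_evenTriples_subset_quadruple_iff [DecidableEq V] {a b c d : V}
    (hab : a ≠ b) (hac : a ≠ c) (had : a ≠ d) (hbc : b ≠ c) (hbd : b ≠ d) (hcd : c ≠ d) :
    (∃ e ∈ evenTriples Γ, e ⊆ {a, b, c, d}) ↔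
      (¬ Γ.Adj b c ↔ (Γ.Adj b d ↔ Γ.Adj c d)) ∨ (¬ Γ.Adj a c ↔ (Γ.Adj a d ↔ Γ.Adj c d)) ∨
      (¬ Γ.Adj a b ↔ (Γ.Adj a d ↔ Γ.Adj b d)) ∨ (¬ Γ.Adj a b ↔ (Γ.Adj a c ↔ Γ.Adj b c)) := by
  rw [exists_mem_subset_quadruple_iff sized_evenTriples hab hac had hbc hbd hcd,
    triple_mem_evenTriples_iff hab hac hbc, triple_mem_evenTriples_iff hab had hbd,
    triple_mem_evenTriples_iff hac had hcd, triple_mem_evenTriples_iff hbc hbd hcd]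

theorem meetsEveryQuadruple_evenTriples (htriangle : Γ.CliqueFree 3) (hmatching : IsTwoKTwoFree Γ) :
    MeetsEveryQuadruple (evenTriples Γ) := by
  classical
  intro S hS
  obtain ⟨a, b, c, d, hab, hac, had, hbc, hbd, hcd, rfl⟩ := card_eq_four.1 hS
  rw [exists_mem_evenTriples_subset_quadruple_iff hab hac had hbc hbd hcd]
  have htri (x y z : V) : ¬ (Γ.Adj x y ∧ Γ.Adj x z ∧ Γ.Adj y z) := fun h =>
    htriangle {x, y, z} (SimpleGraph.is3Clique_triple_iff.2 h)
  have habc := htri a b c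
  have habd := htri a b d
  have hacd := htri a c d
  have hbcd := htri b c d
  have habcd := hmatching (a := a) (b := b) (x := c) (y := d)
  have hacbd := hmatching (a := a) (b := c) (x := b) (y := d)
  have hadbc := hmatching (a := a) (b := d) (x := b) (y := c)
  simp only [Γ.adj_comm d b, Γ.adj_comm d c, Γ.adj_comm c b] at *
  clear htri hmatching htriangle
  grind

theorem MeetsEveryQuadruple.cliqueFree_three {v : V} (hv : Γ.IsIsolated v)
    (h : MeetsEveryQuadruple (evenTriples Γ)) : Γ.CliqueFree 3 := by
  classical
  intro T hT
  obtain ⟨a, b, c, hab, hac, hbc, rfl⟩ := SimpleGraph.is3Clique_iff.1 hT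
  have hva : v ≠ a := by rintro rfl; exact hv _ hab
  have hvb : v ≠ b := by rintro rfl; exact hv _ hbc
  have hvc : v ≠ c := by rintro rfl; exact hv _ hac.symm
  have hmeet := h (card_eq_four.2 ⟨v, a, b, c, hva, hvb, hvc, hab.ne, hac.ne, hbc.ne, rfl⟩)
  rw [exists_mem_evenTriples_subset_quadruple_iff hva hvb hvc hab.ne hac.ne hbc.ne] at hmeet
  simp [hv a, hv b, hv c, hab, hac, hbc] at hmeet

theorem MeetsEveryQuadruple.isTwoKTwoFree (h : MeetsEveryQuadruple (evenTriples Γ)) :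
    IsTwoKTwoFree Γ := by
  classical
  intro a b x y hab hxy
  by_contra! hnone
  obtain ⟨hax, hay, hbx, hby⟩ := hnone
  have hax' : a ≠ x := by rintro rfl; exact hbx hab.symm
  have hay' : a ≠ y := by rintro rfl; exact hby hab.symm
  have hbx' : b ≠ x := by rintro rfl; exact hax hab
  have hby' : b ≠ y := by rintro rfl; exact hay hab
  have hmeet := h (card_eq_four.2 ⟨a, b, x, y, hab.ne, hax', hay', hbx', hby', hxy.ne, rfl⟩)
  rw [exists_mem_evenTriples_subset_quadruple_iff hab.ne hax' hay' hbx' hby' hxy.ne] at hmeet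
  simp [*] at hmeet

theorem bijOn_evenTriples [DecidableEq V] (v : V) :
    Set.BijOn evenTriples
      {Γ : SimpleGraph V | Γ.IsIsolated v ∧ Γ.CliqueFree 3 ∧ IsTwoKTwoFree Γ}
      {G | IsTwoGraph G ∧ MeetsEveryQuadruple G} := by
  refine Set.InvOn.bijOn (f' := coLink v) ⟨?_, ?_⟩ ?_ ?_
  · exact fun Γ hΓ => coLink_evenTriples hΓ.1
  · exact fun G hG => hG.1.evenTriples_coLink v
  · exact fun Γ hΓ => ⟨isTwoGraph_evenTriples, meetsEveryQuadruple_evenTriples hΓ.2.1 hΓ.2.2⟩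
  · intro G ⟨hG, hmeets⟩
    have hv := isIsolated_coLink v G
    rw [← hG.evenTriples_coLink v] at hmeets
    exact ⟨hv, hmeets.cliqueFree_three hv, hmeets.isTwoKTwoFree⟩

theorem numFree_eq_ncard {n : ℕ} (v : Fin n) :
    numFree n 3 4 {0, 1, 3} =
      {Γ : SimpleGraph (Fin n) | Γ.IsIsolated v ∧ Γ.CliqueFree 3 ∧ IsTwoKTwoFree Γ}.ncard := by
  rw [(bijOn_evenTriples v).ncard_eq, numFree, ← Set.ncard_coe_finset]
  congr 1
  ext G
  exact mem_filter_isLKFree_zero_one_three_iff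

end EvenTriples

section ColoredNeighbors

variable {V α : Type*} [Fintype V] {Γ : SimpleGraph V}

open Classical in
/-- The neighbours of `u` of colour `i`; their number is the coloured degree of `u` in `i`. -/
noncomputable def coloredNeighbors (Γ : SimpleGraph V) (c : V → α) (u : V) (i : α) : Finset V :=
  {x | Γ.Adj u x ∧ c x = i}

theorem mem_coloredNeighbors {c : V → α} {u x : V} {i : α} :
    x ∈ coloredNeighbors Γ c u i ↔ Γ.Adj u x ∧ c x = i := by
  simp [coloredNeighbors]

namespace IsTwoKTwoFree

theorem coloredNeighbors_subset_or_subset (hΓ : IsTwoKTwoFree Γ) (c : Γ.Coloring α) {u w : V}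
    (huw : c u = c w) (i : α) :
    coloredNeighbors Γ c u i ⊆ coloredNeighbors Γ c w i ∨
      coloredNeighbors Γ c w i ⊆ coloredNeighbors Γ c u i := by
  by_contra! h
  obtain ⟨⟨x, hxu, hxw⟩, y, hyw, hyu⟩ := h.imp not_subset.1 not_subset.1
  simp only [mem_coloredNeighbors] at hxu hxw hyw hyu
  have hadj := hΓ hxu.1 hyw.1
  grind [SimpleGraph.adj_comm, c.valid (v := u) (w := w), c.valid (v := x) (w := y)]

theorem coloredNeighbors_subset_of_card_le (hΓ : IsTwoKTwoFree Γ) (c : Γ.Coloring α) {u w : V}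
    (huw : c u = c w) {i : α}
    (hcard : #(coloredNeighbors Γ c u i) ≤ #(coloredNeighbors Γ c w i)) :
    coloredNeighbors Γ c u i ⊆ coloredNeighbors Γ c w i :=
  (hΓ.coloredNeighbors_subset_or_subset c huw i).elim id fun hsub =>
    (eq_of_subset_of_card_le hsub hcard).ge

theorem adj_of_card_le (hΓ : IsTwoKTwoFree Γ) (c : Γ.Coloring α) {u w x : V} (huw : c u = c w)
    (hcard : #(coloredNeighbors Γ c u (c x)) ≤ #(coloredNeighbors Γ c w (c x)))
    (hux : Γ.Adj u x) : Γ.Adj w x :=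
  (mem_coloredNeighbors.1 <| hΓ.coloredNeighbors_subset_of_card_le c huw hcard <|
    mem_coloredNeighbors.2 ⟨hux, rfl⟩).1

-- The neighbours of `x` coloured like `u` are those with the largest degrees towards the class of
-- `x`, so `u` is one of them iff its rank in that order does not exceed their number.
theorem adj_iff_card_le [DecidableEq α] (hΓ : IsTwoKTwoFree Γ) (c : Γ.Coloring α) {u x : V} :
    Γ.Adj u x ↔
      #{w | c w = c u ∧ #(coloredNeighbors Γ c u (c x)) ≤ #(coloredNeighbors Γ c w (c x))} ≤
        #(coloredNeighbors Γ c x (c u)) := by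
  constructor
  · intro hux
    refine card_le_card fun w hw => ?_
    obtain ⟨hwu, hcard⟩ := (mem_filter.1 hw).2
    exact mem_coloredNeighbors.2 ⟨(hΓ.adj_of_card_le c hwu.symm hcard hux).symm, hwu⟩
  · contrapose!
    intro hux
    refine card_lt_card ((ssubset_iff_of_subset fun w hw => ?_).2 ⟨u, by simp, fun hu =>
      hux (mem_coloredNeighbors.1 hu).1.symm⟩)
    obtain ⟨hxw, hwu⟩ := mem_coloredNeighbors.1 hw
    exact mem_filter.2 ⟨mem_univ w, hwu, le_of_not_ge fun hle =>
      hux (hΓ.adj_of_card_le c hwu hle hxw.symm)⟩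

end IsTwoKTwoFree

theorem ncard_colorable_isTwoKTwoFree_le (k : ℕ) :
    {Γ : SimpleGraph V | Γ.Colorable k ∧ IsTwoKTwoFree Γ}.ncard ≤
      k ^ Fintype.card V * ((Fintype.card V + 1) ^ k) ^ Fintype.card V := by
  classical
  let code (Γ : {Γ : SimpleGraph V | Γ.Colorable k ∧ IsTwoKTwoFree Γ}) :
      (V → Fin k) × (V → Fin k → Fin (Fintype.card V + 1)) :=
    ⟨Γ.2.1.some, fun u i =>
      ⟨#(coloredNeighbors Γ.1 Γ.2.1.some u i), Nat.lt_succ_of_le (card_le_univ _)⟩⟩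
  have hcode : Function.Injective code := by
    intro Γ Γ' h
    simp only [code, Prod.mk.injEq, funext_iff, Fin.mk.injEq] at h
    ext u x
    rw [Γ.2.2.adj_iff_card_le Γ.2.1.some, Γ'.2.2.adj_iff_card_le Γ'.2.1.some]
    simp only [h]
  have hcard := Nat.card_le_card_of_injective code hcode
  rw [Nat.card_coe_set_eq] at hcard
  simpa using hcard

end ColoredNeighbors

section ChainGraph

variable {α β : Type*}

/-- The bipartite graph on `α ⊕ β` joining `a : α` to every `b : β` below `f a`, so that the
neighbourhoods of the vertices of `α` form a chain when `β` is linearly ordered. -/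
def chainGraph [LT β] (f : α → β) : SimpleGraph (α ⊕ β) where
  Adj
    | .inl a, .inr b => b < f a
    | .inr b, .inl a => b < f a
    | _, _ => False
  symm := ⟨by rintro (_ | _) (_ | _) h <;> exact h⟩
  loopless := ⟨by rintro (_ | _) h <;> exact h⟩

theorem cliqueFree_three_chainGraph [LT β] (f : α → β) : (chainGraph f).CliqueFree 3 := by
  have hcolorable : (chainGraph f).Colorable 2 :=
    ⟨.mk (Sum.elim (fun _ => 0) fun _ => 1) (by rintro (_ | _) (_ | _) h <;> simp_all [chainGraph])⟩
  exact hcolorable.cliqueFree (by norm_num)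

variable [LinearOrder β]

theorem isTwoKTwoFree_chainGraph (f : α → β) : IsTwoKTwoFree (chainGraph f) := by
  rintro (a | a) (b | b) (x | x) (y | y) hab hxy <;> simp only [chainGraph] at * <;> grind

theorem chainGraph_injective : Function.Injective (chainGraph : (α → β) → SimpleGraph (α ⊕ β)) :=
  fun _ _ h => funext fun a => eq_of_forall_lt_iff fun b =>
    iff_of_eq (congrArg (fun Γ => Γ.Adj (.inl a) (.inr b)) h)

end ChainGraph

section Counting

variable {V : Type*} [Fintype V]

theorem ncard_cliqueFree_three_isTwoKTwoFree_le (v : V) :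
    {Γ : SimpleGraph V | Γ.IsIsolated v ∧ Γ.CliqueFree 3 ∧ IsTwoKTwoFree Γ}.ncard ≤
      3 ^ Fintype.card V * ((Fintype.card V + 1) ^ 3) ^ Fintype.card V :=
  (Set.ncard_le_ncard (t := {Γ | Γ.Colorable 3 ∧ IsTwoKTwoFree Γ}) fun _ hΓ =>
    ⟨hΓ.2.2.colorable_three hΓ.2.1, hΓ.2.2⟩).trans
    (ncard_colorable_isTwoKTwoFree_le 3)

theorem pow_le_ncard_cliqueFree_three_isTwoKTwoFree (v : V) {a b : ℕ} (hb : 0 < b)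
    (hab : a + b < Fintype.card V) :
    b ^ a ≤ {Γ : SimpleGraph V | Γ.IsIsolated v ∧ Γ.CliqueFree 3 ∧ IsTwoKTwoFree Γ}.ncard := by
  classical
  have hcard : Fintype.card (Fin a ⊕ Fin b) ≤ Fintype.card {x // x ≠ v} := by
    simpa [Fintype.card_subtype_compl] using Nat.le_sub_one_of_lt hab
  obtain ⟨ι⟩ := Function.Embedding.nonempty_of_card_le hcard
  let j : Fin a ⊕ Fin b ↪ V := ι.trans (.subtype _)
  have hnonempty : Nonempty (Fin a ⊕ Fin b) := ⟨.inr ⟨0, hb⟩⟩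
  have hinj : Function.Injective fun f : Fin a → Fin b => (chainGraph f).map j :=
    (SimpleGraph.map_injective j).comp chainGraph_injective
  calc b ^ a = (Set.range fun f : Fin a → Fin b => (chainGraph f).map j).ncard := by
        rw [← Set.image_univ, Set.ncard_image_of_injective _ hinj]
        simp
    _ ≤ _ := by
        refine Set.ncard_le_ncard ?_
        rintro _ ⟨f, rfl⟩
        refine ⟨?_, SimpleGraph.cliqueFree_map_iff.2 (cliqueFree_three_chainGraph f),
          (isTwoKTwoFree_chainGraph f).map j⟩
        rintro x ⟨-, y, -, -, hy, -⟩
        exact (ι y).2 hy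

end Counting

section Asymptotics

theorem two_rpow_mul_logb {n : ℕ} (hn : 0 < n) (c : ℝ) :
    (2 : ℝ) ^ (c * n * Real.logb 2 n) = (n : ℝ) ^ (c * n) := by
  rw [mul_comm, Real.rpow_mul zero_le_two,
    Real.rpow_logb two_pos (by norm_num) (Nat.cast_pos.2 hn)]

theorem rpow_eighth_mul_le_pow_self {n k : ℕ} (hk : 0 < k) (hsq : n ≤ k ^ 2) (hn : n ≤ 4 * k) :
    (n : ℝ) ^ (1 / 8 * n : ℝ) ≤ (k : ℝ) ^ k := by
  have hsq' : (n : ℝ) ≤ (k : ℝ) ^ (2 : ℝ) := by rw [Real.rpow_two]; exact_mod_cast hsq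
  have hn' : (n : ℝ) ≤ 4 * k := by exact_mod_cast hn
  calc (n : ℝ) ^ (1 / 8 * n : ℝ) ≤ ((k : ℝ) ^ (2 : ℝ)) ^ (1 / 8 * n : ℝ) := by gcongr
    _ = (k : ℝ) ^ (2 * (1 / 8 * n) : ℝ) := (Real.rpow_mul k.cast_nonneg _ _).symm
    _ ≤ (k : ℝ) ^ (k : ℝ) :=
        Real.rpow_le_rpow_of_exponent_le (Nat.one_le_cast.2 hk) (by linarith)
    _ = (k : ℝ) ^ k := Real.rpow_natCast _ _

theorem three_pow_mul_pow_le {n : ℕ} (hn : 3 ≤ n) :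
    3 ^ n * ((n + 1) ^ 3) ^ n ≤ n ^ (7 * n) := by
  calc 3 ^ n * ((n + 1) ^ 3) ^ n ≤ n ^ n * ((n ^ 2) ^ 3) ^ n := by
        gcongr
        nlinarith
    _ = n ^ (7 * n) := by ring

end Asymptotics

/-- Lemma: `f(n,3,4,{0,1,3}) = 2^(Θ(n log₂ n)) = n^(Θ(n))`. -/
theorem count_L013 :
    ∃ c C : ℝ, 0 < c ∧ 0 < C ∧ ∃ n₀ : ℕ, ∀ n : ℕ, n₀ ≤ n →
      (2 : ℝ) ^ (c * (n : ℝ) * Real.logb 2 n) ≤ (numFree n 3 4 {0, 1, 3} : ℝ) ∧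
      (numFree n 3 4 {0, 1, 3} : ℝ) ≤ (2 : ℝ) ^ (C * (n : ℝ) * Real.logb 2 n) := by
  refine ⟨1 / 8, 7, by norm_num, by norm_num, 7, fun n hn => ?_⟩
  let v : Fin n := ⟨0, by omega⟩
  rw [two_rpow_mul_logb (by omega), two_rpow_mul_logb (by omega), numFree_eq_ncard v]
  constructor
  · obtain ⟨k, hk, hkn, hnk⟩ : ∃ k, 3 ≤ k ∧ k + k < n ∧ n ≤ 2 * k + 2 :=
      ⟨(n - 1) / 2, by omega, by omega, by omega⟩
    have hlower := pow_le_ncard_cliqueFree_three_isTwoKTwoFree v (a := k) (b := k) (by omega)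
      (by simpa using hkn)
    exact (rpow_eighth_mul_le_pow_self (k := k) (by omega) (by nlinarith) (by omega)).trans
      (by exact_mod_cast hlower)
  · have hupper := (ncard_cliqueFree_three_isTwoKTwoFree_le v).trans
      (by simpa using three_pow_mul_pow_le (by omega : 3 ≤ n))
    exact_mod_cast hupper
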